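/- Let A ∈ ℝ^{n×p} satisfy the restricted isometry property of order 2k with constant δ_{2k} < 1. Then for every h in the null space of A and every index set S ⊆ {1,…,p} with |S| ≤ k, ‖h_S‖₁ ≤ θ_{2k}·‖h_{S̄}‖₁, where θ_{2k} = sqrt(4(1 + 5δ_{2k} − 4δ_{2k}²)/((1 − δ_{2k})(32 − 25δ_{2k}))). -/

import Mathlib

open Finset

/-- Restriction of a vector to an index set `S` (zero outside `S`). -/
def restr {p : ℕ} (x : Fin p → ℝ) (S : Finset (Fin p)) : Fin p → ℝ :=
  fun i => if i ∈ S then x i else 0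

/-- The ℓ¹ norm. -/
noncomputable def l1 {p : ℕ} (x : Fin p → ℝ) : ℝ := ∑ i, |x i|

/-- The ℓ² norm. -/
noncomputable def l2 {p : ℕ} (x : Fin p → ℝ) : ℝ := Real.sqrt (∑ i, (x i) ^ 2)

/-- `x` is `k`-sparse: its support fits inside a set of at most `k` indices. -/
def Sparse {p : ℕ} (k : ℕ) (x : Fin p → ℝ) : Prop :=
  ∃ S : Finset (Fin p), S.card ≤ k ∧ ∀ i, x i ≠ 0 → i ∈ S

/-- `A` satisfies the restricted isometry property of order `k` with constant `δ ∈ [0,1)`. -/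
def RIP {n p : ℕ} (A : Matrix (Fin n) (Fin p) ℝ) (k : ℕ) (δ : ℝ) : Prop :=
  0 ≤ δ ∧ δ < 1 ∧ ∀ x : Fin p → ℝ, Sparse k x →
    (1 - δ) * (l2 x) ^ 2 ≤ (l2 (A.mulVec x)) ^ 2 ∧
    (l2 (A.mulVec x)) ^ 2 ≤ (1 + δ) * (l2 x) ^ 2

lemma lp_aux {ι : Type*} [Fintype ι] [DecidableEq ι] (c x : ι → ℝ) (s : ℕ) (C : ℝ)
    (hx0 : ∀ i, 0 ≤ x i) (hx1 : ∀ i, x i ≤ 1) (hxs : ∑ i, x i ≤ s)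
    (hB : ∀ B : Finset ι, B.card ≤ s → C ≤ ∑ i ∈ B, c i) : C ≤ ∑ i, c i * x i := by
  classical
  obtain ⟨B, hBm, hmin⟩ := Finset.exists_min_image
    ((Finset.univ : Finset (Finset ι)).filter (fun B => B.card ≤ s))
    (fun B => ∑ i ∈ B, c i) ⟨∅, by simp⟩
  have hBs : B.card ≤ s := by simpa using hBm
  have hmin' : ∀ D : Finset ι, D.card ≤ s → ∑ i ∈ B, c i ≤ ∑ i ∈ D, c i := by
    intro D hD
    exact hmin D (by simpa using hD)
  have hneg : ∀ i ∈ B, c i ≤ 0 := by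
    intro i hi
    have h1 := hmin' (B.erase i) ((Finset.card_erase_le).trans hBs)
    have h2 := Finset.add_sum_erase B c hi
    linarith
  have key : ∃ τ : ℝ, (∀ i ∈ B, c i ≤ τ) ∧ (∀ j, j ∉ B → τ ≤ c j) ∧
      τ * B.card ≤ τ * ∑ i, x i := by
    by_cases hlt : B.card < s
    · refine ⟨0, hneg, ?_, by simp⟩
      intro j hj
      have h1 := hmin' (insert j B) (by rw [Finset.card_insert_of_notMem hj]; omega)
      rw [Finset.sum_insert hj] at h1
      linarith
    · have hs : B.card = s := by omega
      rcases B.eq_empty_or_nonempty with he | hne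
      · subst he
        have h0 : ∑ i, x i = 0 := by
          apply le_antisymm
          · rw [← hs] at hxs; simpa using hxs
          · exact Finset.sum_nonneg (fun i _ => hx0 i)
        by_cases hι : Nonempty ι
        · obtain ⟨j0, hj0⟩ := Finite.exists_min c
          exact ⟨c j0, by simp, fun j _ => hj0 j, by rw [h0]; simp⟩
        · exact ⟨0, by simp, fun j => (hι ⟨j⟩).elim, by simp⟩
      · obtain ⟨m, hm, hmax⟩ := Finset.exists_max_image B c hne
        refine ⟨c m, hmax, ?_, ?_⟩
        · intro j hj
          have hj' : j ∉ B.erase m := fun h => hj (Finset.mem_of_mem_erase h)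
          have h1 := hmin' (insert j (B.erase m)) (by
            rw [Finset.card_insert_of_notMem hj', Finset.card_erase_of_mem hm]
            have := Finset.card_pos.mpr hne
            omega)
          rw [Finset.sum_insert hj'] at h1
          have h2 := Finset.add_sum_erase B c hm
          linarith
        · rw [hs]
          exact mul_le_mul_of_nonpos_left hxs (hneg m hm)
  obtain ⟨τ, h1, h2, h3⟩ := key
  refine (hB B hBs).trans ?_
  have e1 : ∑ i ∈ B, c i = ∑ i, c i * (if i ∈ B then 1 else 0) := by simp
  have e2 : τ * (B.card : ℝ) = ∑ i, τ * (if i ∈ B then 1 else 0) := by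
    simp [mul_comm]
  rw [e2, Finset.mul_sum] at h3
  rw [e1]
  have h4 : ∑ i, (c i * (if i ∈ B then 1 else 0) - τ * (if i ∈ B then 1 else 0))
      ≤ ∑ i, (c i * x i - τ * x i) := by
    apply Finset.sum_le_sum
    intro i _
    by_cases hi : i ∈ B
    · simp only [hi, if_true]
      nlinarith [h1 i hi, hx1 i]
    · simp only [hi, if_false]
      nlinarith [h2 i hi, hx0 i]
  rw [Finset.sum_sub_distrib, Finset.sum_sub_distrib] at h4
  linarith

lemma l2_sq {p : ℕ} (x : Fin p → ℝ) : (l2 x) ^ 2 = x ⬝ᵥ x := by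
  unfold l2
  rw [Real.sq_sqrt (Finset.sum_nonneg (fun i _ => sq_nonneg _))]
  simp [dotProduct, pow_two]

lemma rip_pair {n p K : ℕ} (A : Matrix (Fin n) (Fin p) ℝ) (δ : ℝ) (hRIP : RIP A K δ)
    (w u : Fin p → ℝ) (V Z : Finset (Fin p)) (hV : ∀ i, w i ≠ 0 → i ∈ V)
    (hZ : ∀ i, u i ≠ 0 → i ∈ Z) (hc : (V ∪ Z).card ≤ K) (hwu : w ⬝ᵥ u = 0) :
    (1 - δ ^ 2) * (w ⬝ᵥ w) - δ ^ 2 * (u ⬝ᵥ u) ≤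
      2 * (A.mulVec w ⬝ᵥ A.mulVec w + A.mulVec w ⬝ᵥ A.mulVec u) := by
  obtain ⟨h0, h1, hr⟩ := hRIP
  have hsp : ∀ a b : ℝ, Sparse K (a • w + b • u) := by
    intro a b
    refine ⟨V ∪ Z, hc, ?_⟩
    intro i hi
    by_contra hn
    rw [Finset.mem_union, not_or] at hn
    apply hi
    have hw : w i = 0 := by by_contra h; exact hn.1 (hV i h)
    have hu : u i = 0 := by by_contra h; exact hn.2 (hZ i h)
    simp [hw, hu]
  have huw : u ⬝ᵥ w = 0 := by rw [dotProduct_comm]; exact hwu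
  have hexp : ∀ a b : ℝ, (l2 (a • w + b • u)) ^ 2 = a ^ 2 * (w ⬝ᵥ w) + b ^ 2 * (u ⬝ᵥ u) := by
    intro a b
    rw [l2_sq]
    simp only [dotProduct_add, add_dotProduct, smul_dotProduct, dotProduct_smul, smul_eq_mul,
      hwu, huw]
    ring
  have hexpA : ∀ a b : ℝ, (l2 (A.mulVec (a • w + b • u))) ^ 2 =
      a ^ 2 * (A.mulVec w ⬝ᵥ A.mulVec w) + 2 * a * b * (A.mulVec w ⬝ᵥ A.mulVec u)
        + b ^ 2 * (A.mulVec u ⬝ᵥ A.mulVec u) := by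
    intro a b
    rw [l2_sq, Matrix.mulVec_add, Matrix.mulVec_smul, Matrix.mulVec_smul]
    simp only [dotProduct_add, add_dotProduct, smul_dotProduct, dotProduct_smul, smul_eq_mul,
      dotProduct_comm (A.mulVec u) (A.mulVec w)]
    ring
  have hX : 0 ≤ w ⬝ᵥ w := by rw [← l2_sq]; positivity
  have hU : 0 ≤ u ⬝ᵥ u := by rw [← l2_sq]; positivity
  rcases h0.eq_or_lt with hd | hd
  · subst hd
    have a1 := (hr _ (hsp 2 1)).1
    have a2 := (hr _ (hsp 0 1)).2
    rw [hexp, hexpA] at a1 a2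
    nlinarith
  · have a1 := (hr _ (hsp (1 + δ) δ)).1
    have a2 := (hr _ (hsp (1 - δ) (-δ))).2
    rw [hexp, hexpA] at a1 a2
    generalize w ⬝ᵥ w = X at *
    generalize u ⬝ᵥ u = U at *
    generalize A.mulVec w ⬝ᵥ A.mulVec w = W at *
    generalize A.mulVec w ⬝ᵥ A.mulVec u = Y at *
    generalize A.mulVec u ⬝ᵥ A.mulVec u = Q at *
    have : 2 * δ * ((1 - δ ^ 2) * X - δ ^ 2 * U) ≤ 2 * δ * (2 * (W + Y)) := by
      nlinarith
    exact le_of_mul_le_mul_left this (by positivity)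

lemma main_aux {n p k : ℕ} (A : Matrix (Fin n) (Fin p) ℝ) (δ : ℝ)
    (hRIP : RIP A (2 * k) δ) (hk : 0 < k) (h : Fin p → ℝ) (hA : A.mulVec h = 0)
    (S : Finset (Fin p)) (hS : S.card ≤ k) :
    (1 - δ ^ 2) * (∑ i ∈ S, |h i|) ^ 2 ≤ δ ^ 2 * (∑ i ∈ Sᶜ, |h i|) ^ 2 := by
  classical
  have hk' : (0 : ℝ) < k := by exact_mod_cast hk
  set b := ∑ i ∈ Sᶜ, |h i| with hb
  have hb0 : 0 ≤ b := Finset.sum_nonneg (fun i _ => abs_nonneg _)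
  set α := b / k with hα
  have hα0 : 0 ≤ α := by positivity
  have hkα : k * α = b := by rw [hα]; field_simp
  set L := Sᶜ.filter (fun i => α < |h i|) with hL
  set R := Sᶜ.filter (fun i => ¬ α < |h i|) with hR
  have hsplit : ∑ i ∈ L, |h i| + ∑ i ∈ R, |h i| = b := Finset.sum_filter_add_sum_filter_not _ _ _
  have hLle : (L.card : ℝ) * α ≤ ∑ i ∈ L, |h i| := by
    rw [← nsmul_eq_mul]
    apply Finset.card_nsmul_le_sum
    intro i hi
    exact (Finset.mem_filter.mp hi).2.le
  have hR0 : 0 ≤ ∑ i ∈ R, |h i| := Finset.sum_nonneg (fun i _ => abs_nonneg _)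
  have hLk : L.card ≤ k := by
    rcases hα0.eq_or_lt with hz | hz
    · have hbz : b = 0 := by rw [← hkα, ← hz]; simp
      have : L = ∅ := by
        rw [hL, Finset.filter_eq_empty_iff]
        intro i hi
        have := (Finset.sum_eq_zero_iff_of_nonneg (fun i _ => abs_nonneg (h i))).mp (hb ▸ hbz) i hi
        rw [this, ← hz]; simp
      rw [this]; simp
    · have : (L.card : ℝ) * α ≤ k * α := by linarith
      exact_mod_cast le_of_mul_le_mul_right this hz
  -- the two parts
  set w : Fin p → ℝ := fun i => if i ∈ S ∪ L then h i else 0 with hw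
  set v : Fin p → ℝ := fun i => if i ∈ R then h i else 0 with hv
  have hRdisj : ∀ i, i ∈ R ↔ i ∉ S ∪ L := by
    intro i
    simp only [hR, hL, Finset.mem_filter, Finset.mem_union, Finset.mem_compl]
    tauto
  have hwv : w + v = h := by
    funext i
    simp only [hw, hv, Pi.add_apply, hRdisj]
    by_cases hi : i ∈ S ∪ L <;> simp [hi]
  have hAv : A.mulVec v = - A.mulVec w := by
    have := hA
    rw [← hwv, Matrix.mulVec_add] at this
    exact eq_neg_of_add_eq_zero_right this
  set sg : Fin p → ℝ := fun i => if i ∈ R then SignType.sign (h i) else 0 with hsg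
  set y : Fin p → ℝ := Matrix.vecMul (A.mulVec w) A with hy
  set x : Fin p → ℝ := fun i => |v i| / α with hx
  have hvα : ∀ i, |v i| ≤ α := by
    intro i
    by_cases hi : i ∈ R
    · simp only [hv, hi, if_true]
      exact not_lt.mp (Finset.mem_filter.mp hi).2
    · simp [hv, hi, hα0]
  have hvx : ∀ i, α * sg i * x i = v i := by
    intro i
    have e : α * x i = |v i| := by
      rcases hα0.eq_or_lt with hz | hz
      · have := hvα i
        have h2 := abs_nonneg (v i)
        rw [← hz] at this ⊢
        linarith
      · simp only [hx]; field_simp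
    have e2 : α * sg i * x i = sg i * (α * x i) := by ring
    rw [e2, e]
    by_cases hi : i ∈ R
    · simp [hsg, hv, hi]
    · simp [hsg, hv, hi]
  set C := ((1 - δ ^ 2) * (w ⬝ᵥ w) - δ ^ 2 * (k * α ^ 2)) / 2 - A.mulVec w ⬝ᵥ A.mulVec w with hC
  have hlp : C ≤ ∑ i, (y i * (α * sg i)) * x i := by
    apply lp_aux (s := k - L.card)
    · intro i; simp only [hx]; positivity
    · intro i; exact div_le_one_of_le₀ (hvα i) hα0
    · simp only [hx]
      rw [← Finset.sum_div]
      have hsum : ∑ i, |v i| = ∑ i ∈ R, |h i| := by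
        simp only [hv, apply_ite abs, abs_zero]
        simp
      rw [hsum, Nat.cast_sub hLk]
      apply div_le_of_le_mul₀ hα0
      · have : (L.card : ℝ) ≤ k := by exact_mod_cast hLk
        linarith
      · nlinarith
    · intro B hB
      set u : Fin p → ℝ := fun i => if i ∈ B then α * sg i else 0 with hu
      have hsum : ∑ i ∈ B, y i * (α * sg i) = A.mulVec w ⬝ᵥ A.mulVec u := by
        rw [Matrix.dotProduct_mulVec, ← hy]
        simp [dotProduct, hu]
      rw [hsum]
      have hsg1 : ∀ i, (sg i) ^ 2 ≤ 1 := by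
        intro i
        simp only [hsg]
        split_ifs
        · rcases lt_trichotomy (h i) 0 with h1 | h1 | h1 <;> simp [h1]
        · simp
      have huu : u ⬝ᵥ u ≤ k * α ^ 2 := by
        have e : u ⬝ᵥ u = ∑ i ∈ B, (α * sg i) ^ 2 := by
          simp [dotProduct, hu, pow_two]
        rw [e]
        have : ∑ i ∈ B, (α * sg i) ^ 2 ≤ B.card • α ^ 2 := by
          apply Finset.sum_le_card_nsmul
          intro i _
          rw [mul_pow]
          nlinarith [hsg1 i, sq_nonneg α]
        rw [nsmul_eq_mul] at this
        have hBk : (B.card : ℝ) ≤ k := by exact_mod_cast (by omega : B.card ≤ k)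
        nlinarith [sq_nonneg α]
      have hpair := rip_pair A δ hRIP w u (S ∪ L) B
        (by intro i hi; by_contra hn; exact hi (by simp only [hw, hn, if_false]))
        (by intro i hi; by_contra hn; exact hi (by simp only [hu, hn, if_false]))
        (by
          have h1 := Finset.card_union_le (S ∪ L) B
          have h2 := Finset.card_union_le S L
          omega)
        (by
          unfold dotProduct
          apply Finset.sum_eq_zero
          intro i _
          by_cases hi : i ∈ S ∪ L
          · have : i ∉ R := fun hh => (hRdisj i).mp hh hi
            simp [hu, hsg, this]
          · simp only [hw, hi, if_false, zero_mul])
      have := mul_le_mul_of_nonneg_left huu (sq_nonneg δ)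
      rw [hC]
      linarith
  have hval : ∑ i, (y i * (α * sg i)) * x i = - (A.mulVec w ⬝ᵥ A.mulVec w) := by
    have : ∑ i, (y i * (α * sg i)) * x i = y ⬝ᵥ v := by
      unfold dotProduct
      apply Finset.sum_congr rfl
      intro i _
      rw [← hvx i]; ring
    rw [this, hy, ← Matrix.dotProduct_mulVec, hAv, dotProduct_neg]
  rw [hval, hC] at hlp
  have hfin : (1 - δ ^ 2) * (w ⬝ᵥ w) ≤ δ ^ 2 * (k * α ^ 2) := by linarith
  have hcs : (∑ i ∈ S, |h i|) ^ 2 ≤ k * (w ⬝ᵥ w) := by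
    have h1 := sq_sum_le_card_mul_sum_sq (s := S) (f := fun i => |h i|)
    have h2 : ∑ i ∈ S, |h i| ^ 2 ≤ w ⬝ᵥ w := by
      unfold dotProduct
      calc ∑ i ∈ S, |h i| ^ 2 = ∑ i ∈ S, w i * w i := by
            apply Finset.sum_congr rfl
            intro i hi
            have : i ∈ S ∪ L := Finset.mem_union_left _ hi
            simp only [hw, this, if_true, sq_abs]; ring
        _ ≤ ∑ i, w i * w i := Finset.sum_le_sum_of_subset_of_nonneg (Finset.subset_univ _)
            (fun i _ _ => mul_self_nonneg _)
    have h3 : (0 : ℝ) ≤ ∑ i ∈ S, |h i| ^ 2 := Finset.sum_nonneg (fun i _ => by positivity)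
    have h4 : (S.card : ℝ) ≤ k := by exact_mod_cast hS
    calc _ ≤ _ := h1
      _ ≤ (k : ℝ) * ∑ i ∈ S, |h i| ^ 2 := mul_le_mul_of_nonneg_right h4 h3
      _ ≤ _ := mul_le_mul_of_nonneg_left h2 hk'.le
  obtain ⟨h0, h1, -⟩ := hRIP
  have hδ : 0 ≤ 1 - δ ^ 2 := by nlinarith
  calc (1 - δ ^ 2) * (∑ i ∈ S, |h i|) ^ 2 ≤ (1 - δ ^ 2) * (k * (w ⬝ᵥ w)) :=
        mul_le_mul_of_nonneg_left hcs hδ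
    _ = k * ((1 - δ ^ 2) * (w ⬝ᵥ w)) := by ring
    _ ≤ k * (δ ^ 2 * (k * α ^ 2)) := mul_le_mul_of_nonneg_left hfin hk'.le
    _ = δ ^ 2 * (k * α) ^ 2 := by ring
    _ = δ ^ 2 * b ^ 2 := by rw [hkα]

lemma l1_restr {p : ℕ} (h : Fin p → ℝ) (S : Finset (Fin p)) :
    l1 (restr h S) = ∑ i ∈ S, |h i| := by
  simp only [l1, restr, apply_ite abs, abs_zero]
  simp

theorem stmt7 {n p k : ℕ} (A : Matrix (Fin n) (Fin p) ℝ) (δ : ℝ)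
    (hRIP : RIP A (2 * k) δ) :
    ∀ h : Fin p → ℝ, A.mulVec h = 0 →
      ∀ S : Finset (Fin p), S.card ≤ k →
        l1 (restr h S) ≤
          Real.sqrt (4 * (1 + 5 * δ - 4 * δ ^ 2) / ((1 - δ) * (32 - 25 * δ))) *
            l1 (restr h Sᶜ) := by
  intro h hA S hS
  rw [l1_restr, l1_restr]
  have hb0 : 0 ≤ ∑ i ∈ Sᶜ, |h i| := Finset.sum_nonneg (fun i _ => abs_nonneg _)
  rcases Nat.eq_zero_or_pos k with hk | hk
  · subst hk
    have : S = ∅ := Finset.card_eq_zero.mp (by omega)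
    subst this
    rw [Finset.sum_empty]
    positivity
  have hm := main_aux A δ hRIP hk h hA S hS
  have ha0 : 0 ≤ ∑ i ∈ S, |h i| := Finset.sum_nonneg (fun i _ => abs_nonneg _)
  obtain ⟨h0, h1, -⟩ := hRIP
  generalize ∑ i ∈ Sᶜ, |h i| = b at *
  generalize ∑ i ∈ S, |h i| = a at *
  have hd1 : 0 < 1 - δ := by linarith
  have hd2 : 0 < 32 - 25 * δ := by linarith
  have hd3 : 0 < 1 - δ ^ 2 := by nlinarith
  have hθ : δ ^ 2 / (1 - δ ^ 2) ≤
      4 * (1 + 5 * δ - 4 * δ ^ 2) / ((1 - δ) * (32 - 25 * δ)) := by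
    rw [div_le_div_iff₀ hd3 (by positivity)]
    have hp : 0 ≤ 4 + 24 * δ - 28 * δ ^ 2 + 9 * δ ^ 3 := by
      have : 0 ≤ δ ^ 3 := by positivity
      nlinarith
    have := mul_nonneg hd1.le hp
    nlinarith
  rw [← Real.sqrt_sq ha0, ← Real.sqrt_sq hb0, ← Real.sqrt_mul' _ (sq_nonneg _)]
  apply Real.sqrt_le_sqrt
  have h2 : a ^ 2 ≤ δ ^ 2 / (1 - δ ^ 2) * b ^ 2 := by
    rw [div_mul_eq_mul_div, le_div_iff₀ hd3]
    linarith
  exact h2.trans (mul_le_mul_of_nonneg_right hθ (sq_nonneg _))
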